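/- Let V be a smooth q-vector field on an open set U ⊆ ℝⁿ and x ∈ U. Then V has constant coefficients on a neighbourhood of x if and only if there exist an open neighbourhood W of x and a torsion-free flat linear connection Γ on W such that ∇V = 0 on W. -/

import Mathlib

/-- Constant coefficients for a `q`-vector field (see context). -/
def HasConstantCoefficientsVecAt (n q : ℕ) (U : Set (Fin n → ℝ))
    (V : (Fin n → ℝ) → (((Fin n → ℝ) →L[ℝ] ℝ) [×q]→L[ℝ] ℝ)) (x : Fin n → ℝ) : Prop :=
  ∃ W : Set (Fin n → ℝ), IsOpen W ∧ x ∈ W ∧ W ⊆ U ∧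
    ∃ u : (Fin n → ℝ) → (Fin n → ℝ),
      ContDiffOn ℝ (⊤ : ℕ∞) u W ∧ Set.InjOn u W ∧ IsOpen (u '' W) ∧
      (∀ y ∈ W, Function.Bijective (fderiv ℝ u y)) ∧
      ∃ c : ((Fin n → ℝ) →L[ℝ] ℝ) [×q]→L[ℝ] ℝ,
        ∀ y ∈ W, ∀ w : Fin q → ((Fin n → ℝ) →L[ℝ] ℝ),
          c w = V y (fun i => (w i).comp (fderiv ℝ u y))

/-!
If `u` is a chart in which `V` is constant, the connection `Γ = (Du)⁻¹ D²u` is smooth and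
torsion-free. Since `d(Du) = Du Γ`, the rows of `Du` are parallel covector fields: hence `Γ` is
flat, and `V`, whose components on them are constant, is parallel.

Conversely, given `Γ`, solve `dA = A Γ`, `A(x) = 1` along the rays from `x`. Flatness makes the
solution satisfy the equation in all directions, not only radially. Torsion-freeness makes the
vector-valued one-form `A` closed, so `A = Du` near `x` by the Poincaré lemma; `u` is a chart by the
inverse function theorem, and the components of the parallel tensor `V` on the rows of `Du`, which
are parallel, are constant.
-/

open Set Metric Filter Topology AffineMap
open scoped ContDiff

section LinearODE

variable {M : Type*} [NormedRing M]

theorem lipschitzWith_mul_right_of_norm_le_one {a : M} (ha : ‖a‖ ≤ 1) :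
    LipschitzWith 1 (· * a) :=
  .of_dist_le_mul fun b c ↦ by
    simpa [dist_eq_norm, sub_mul] using (norm_mul_le (b - c) a).trans
      (mul_le_of_le_one_right (norm_nonneg _) ha)

variable [NormedAlgebra ℝ M] {g α β β' : ℝ → M}

theorem exists_hasDerivWithinAt_mul_right [CompleteSpace M] (hg : ContinuousOn g (Icc 0 1))
    (hbound : ∀ t ∈ Icc (0 : ℝ) 1, ‖g t‖ ≤ 1 / 2) (a₀ : M) :
    ∃ α : ℝ → M, α 0 = a₀ ∧ ∀ t ∈ Icc (0 : ℝ) 1, HasDerivWithinAt α (α t * g t) (Icc 0 1) t := by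
  have hPL : IsPicardLindelof (fun t (a : M) ↦ a * g t) (tmin := 0) (tmax := 1)
      ⟨0, by simp⟩ a₀ ‖a₀‖₊ 0 ‖a₀‖₊ 1 :=
    { lipschitzOnWith := fun t ht ↦ (lipschitzWith_mul_right_of_norm_le_one
        ((hbound t ht).trans (by norm_num))).lipschitzOnWith
      continuousOn := fun a _ ↦ continuousOn_const.mul hg
      norm_le := fun t ht a ha ↦ by
        have ha' : ‖a‖ ≤ 2 * ‖a₀‖ := by
          rw [mem_closedBall, dist_eq_norm, coe_nnnorm] at ha
          linarith [norm_le_norm_add_norm_sub a₀ a, norm_sub_rev a a₀]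
        calc ‖a * g t‖ ≤ ‖a‖ * ‖g t‖ := norm_mul_le _ _
          _ ≤ 2 * ‖a₀‖ * (1 / 2) := by gcongr; exact hbound t ht
          _ = ‖a₀‖₊ := by rw [coe_nnnorm]; ring
      mul_max_le := by simp }
  exact hPL.exists_eq_forall_mem_Icc_hasDerivWithinAt₀

theorem norm_sub_le_of_approx_solution_mul_right {ε : ℝ}
    (hbound : ∀ t ∈ Icc (0 : ℝ) 1, ‖g t‖ ≤ 1)
    (hα : ∀ t ∈ Icc (0 : ℝ) 1, HasDerivWithinAt α (α t * g t) (Icc 0 1) t)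
    (hβ : ∀ t ∈ Icc (0 : ℝ) 1, HasDerivWithinAt β (β' t) (Icc 0 1) t)
    (hε : ∀ t ∈ Icc (0 : ℝ) 1, ‖β' t - β t * g t‖ ≤ ε) (h₀ : α 0 = β 0) :
    ‖α 1 - β 1‖ ≤ ε * (Real.exp 1 - 1) := by
  have right_deriv {f : ℝ → M} {f' : M} {t : ℝ} (ht : t ∈ Ico (0 : ℝ) 1)
      (hf : HasDerivWithinAt f f' (Icc 0 1) t) : HasDerivWithinAt f f' (Ici t) t :=
    hf.mono_of_mem_nhdsWithin <|
      mem_of_superset (Icc_mem_nhdsGE ht.2) (Icc_subset_Icc_left ht.1)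
  have gronwall := dist_le_of_approx_trajectories_ODE_of_mem (K := 1) (εf := 0) (εg := ε) (δ := 0)
    (v := fun t a ↦ a * g t) (s := fun _ ↦ univ)
    (fun t ht ↦ (lipschitzWith_mul_right_of_norm_le_one
      (hbound t (Ico_subset_Icc_self ht))).lipschitzOnWith)
    (fun t ht ↦ (hα t ht).continuousWithinAt)
    (fun t ht ↦ right_deriv ht (hα t (Ico_subset_Icc_self ht)))
    (fun t _ ↦ (dist_self _).le) (fun t _ ↦ mem_univ _)
    (fun t ht ↦ (hβ t ht).continuousWithinAt)
    (fun t ht ↦ right_deriv ht (hβ t (Ico_subset_Icc_self ht)))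
    (fun t ht ↦ (dist_eq_norm _ _).trans_le (hε t (Ico_subset_Icc_self ht)))
    (fun t _ ↦ mem_univ _) (dist_le_zero.2 h₀) 1 (by simp)
  simpa [gronwallBound, dist_eq_norm] using gronwall

end LinearODE

section TaylorBound

variable {E F : Type*} [NormedAddCommGroup E] [NormedSpace ℝ E] [NormedAddCommGroup F]
  [NormedSpace ℝ F] {f : E → F} {s t : Set E} {x : E} {C : ℝ}

/-- `f` is differentiable on `s` and the single constant `C` bounds there its norm, its increments
to first order and its first-order Taylor remainders to second order. -/
structure HasTaylorBoundOn (f : E → F) (s : Set E) (C : ℝ) : Prop where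
  differentiableAt : ∀ p ∈ s, DifferentiableAt ℝ f p
  norm_le : ∀ p ∈ s, ‖f p‖ ≤ C
  norm_sub_le : ∀ p ∈ s, ∀ q ∈ s, ‖f q - f p‖ ≤ C * ‖q - p‖
  norm_sub_sub_fderiv_le : ∀ p ∈ s, ∀ q ∈ s, ‖f q - f p - fderiv ℝ f p (q - p)‖ ≤ C * ‖q - p‖ ^ 2

theorem HasTaylorBoundOn.mono (h : HasTaylorBoundOn f t C) (hst : s ⊆ t) :
    HasTaylorBoundOn f s C where
  differentiableAt p hp := h.differentiableAt p (hst hp)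
  norm_le p hp := h.norm_le p (hst hp)
  norm_sub_le p hp q hq := h.norm_sub_le p (hst hp) q (hst hq)
  norm_sub_sub_fderiv_le p hp q hq := h.norm_sub_sub_fderiv_le p (hst hp) q (hst hq)

theorem norm_sub_sub_fderiv_le_of_lipschitzOnWith {K : NNReal} (hs : Convex ℝ s)
    (hf : ∀ p ∈ s, DifferentiableAt ℝ f p) (hK : LipschitzOnWith K (fderiv ℝ f) s)
    {p q : E} (hp : p ∈ s) (hq : q ∈ s) :
    ‖f q - f p - fderiv ℝ f p (q - p)‖ ≤ K * ‖q - p‖ ^ 2 := by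
  have hseg : segment ℝ p q ⊆ s := hs.segment_subset hp hq
  calc ‖f q - f p - fderiv ℝ f p (q - p)‖ ≤ K * ‖q - p‖ * ‖q - p‖ :=
        (convex_segment p q).norm_image_sub_le_of_norm_fderiv_le'
          (fun y hy ↦ hf y (hseg hy))
          (fun y hy ↦ (hK.norm_sub_le (hseg hy) hp).trans <| by
            gcongr; exact norm_sub_le_of_mem_segment hy)
          (left_mem_segment ℝ p q) (right_mem_segment ℝ p q)
    _ = K * ‖q - p‖ ^ 2 := by ring

theorem exists_hasTaylorBoundOn_ball (hf : ContDiffAt ℝ 2 f x) :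
    ∃ C > 0, ∃ r > 0, HasTaylorBoundOn f (ball x r) C := by
  have hf₁ : ContDiffAt ℝ 1 f x := hf.of_le one_le_two
  obtain ⟨K₁, s₁, hs₁, hK₁⟩ := hf₁.exists_lipschitzOnWith
  obtain ⟨K₂, s₂, hs₂, hK₂⟩ := (hf.fderiv_right (m := 1) le_rfl).exists_lipschitzOnWith
  have hdiff : ∀ᶠ p in 𝓝 x, DifferentiableAt ℝ f p :=
    (hf₁.eventually (by simp)).mono fun p hp ↦ hp.differentiableAt one_ne_zero
  have hnorm : ∀ᶠ p in 𝓝 x, ‖f p‖ < ‖f x‖ + 1 :=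
    hf.continuousAt.norm.eventually_lt continuousAt_const (lt_add_one _)
  obtain ⟨r, hr, hball⟩ := eventually_nhds_iff_ball.1
    ((hdiff.and hnorm).and ((eventually_mem_set.2 hs₁).and (eventually_mem_set.2 hs₂)))
  refine ⟨‖f x‖ + 1 + K₁ + K₂, by positivity, r, hr,
    { differentiableAt := fun p hp ↦ (hball p hp).1.1
      norm_le := fun p hp ↦ (hball p hp).1.2.le.trans (by linarith [K₁.coe_nonneg, K₂.coe_nonneg])
      norm_sub_le := fun p hp q hq ↦
        (hK₁.norm_sub_le (hball q hq).2.1 (hball p hp).2.1).trans <| by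
          gcongr; linarith [norm_nonneg (f x), K₂.coe_nonneg]
      norm_sub_sub_fderiv_le := fun p hp q hq ↦
        (norm_sub_sub_fderiv_le_of_lipschitzOnWith (convex_ball x r) (fun y hy ↦ (hball y hy).1.1)
          (hK₂.mono fun y hy ↦ (hball y hy).2.2) hp hq).trans <| by
            gcongr; linarith [norm_nonneg (f x), K₁.coe_nonneg] }⟩

end TaylorBound

section Frobenius

variable {E M : Type*} [NormedAddCommGroup E] [NormedSpace ℝ E] [NormedRing M] [NormedAlgebra ℝ M]
  {Γ : E → E →L[ℝ] M} {A : E → M} {s : Set E} {x y z : E} {C : ℝ}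

/-- The curvature `dΓ + Γ ∧ Γ` of an algebra-valued connection form `Γ`, evaluated at the point `y`
on the vectors `v` and `w`. -/
noncomputable def curvature (Γ : E → E →L[ℝ] M) (y v w : E) : M :=
  fderiv ℝ Γ y v w - fderiv ℝ Γ y w v + Γ y v * Γ y w - Γ y w * Γ y v

/-- `A` satisfies `dA = A Γ` at the point `y`. For an endomorphism-valued `Γ` this says that the
covector field `λ ∘ A` is parallel at `y` for every constant covector `λ`; these fields form a
coframe where `A` is invertible, which is kept as a separate hypothesis. -/
def IsParallelCoframeAt (Γ : E → E →L[ℝ] M) (A : E → M) (y : E) : Prop :=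
  HasFDerivAt A (ContinuousLinearMap.mul ℝ M (A y) ∘L Γ y) y

/-- `a` is the parallel transport along the segment from `x` to `y`: on the time interval `[0, 1]`
it solves `a' = a Γ(y - x)` with initial value `1`. -/
def IsSegmentTransport (Γ : E → E →L[ℝ] M) (x y : E) (a : ℝ → M) : Prop :=
  a 0 = 1 ∧ ∀ t ∈ Icc (0 : ℝ) 1, HasDerivWithinAt a (a t * Γ (lineMap x y t) (y - x)) (Icc 0 1) t

theorem norm_apply_lineMap_le (hs : Convex ℝ s) (hΓ : HasTaylorBoundOn Γ s C) (hx : x ∈ s)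
    (hy : y ∈ s) {t : ℝ} (ht : t ∈ Icc (0 : ℝ) 1) :
    ‖Γ (lineMap x y t) (y - x)‖ ≤ C * ‖y - x‖ :=
  ContinuousLinearMap.le_of_opNorm_le _ (hΓ.norm_le _ (hs.lineMap_mem hx hy ht)) _

theorem exists_isSegmentTransport [CompleteSpace M] (hs : Convex ℝ s)
    (hΓ : HasTaylorBoundOn Γ s C) (hx : x ∈ s) (hy : y ∈ s) (hsmall : C * ‖y - x‖ ≤ 1 / 2) :
    ∃ a, IsSegmentTransport Γ x y a := by
  refine exists_hasDerivWithinAt_mul_right (fun t ht ↦ ?_)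
    (fun t ht ↦ (norm_apply_lineMap_le hs hΓ hx hy ht).trans hsmall) 1
  have hΓt : ContinuousAt Γ (lineMap x y t) :=
    (hΓ.differentiableAt _ (hs.lineMap_mem hx hy ht)).continuousAt
  exact ((hΓt.comp hasDerivAt_lineMap.continuousAt).clm_apply continuousAt_const).continuousWithinAt

theorem IsSegmentTransport.apply_one_of_self {a : ℝ → M} (ha : IsSegmentTransport Γ x x a) :
    a 1 = 1 := by
  have := norm_sub_le_of_approx_solution_mul_right (g := 0) (ε := 0) (β := fun _ ↦ 1)
    (β' := fun _ ↦ 0) (by simp) (fun t ht ↦ by simpa using ha.2 t ht)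
    (fun t _ ↦ hasDerivWithinAt_const t _ _) (by simp) ha.1
  simpa [sub_eq_zero] using this

theorem transport_defect_eq {G G' : E →L[ℝ] M} {D : E →L[ℝ] E →L[ℝ] M} {e h : E}
    (hflat : D e h - D h e + G e * G h - G h * G e = 0) (a : M) (t : ℝ) :
    a * G e * (1 + t • G h) + a * (G h + t • D e h) - a * (1 + t • G h) * G' (e + h) =
      -(a * ((G' - G - D (t • h)) e + (G' - G) h + t • (G h * ((G' - G) e + G' h)))) := by
  have hD : D e h = D h e - (G e * G h - G h * G e) := by
    rw [← sub_eq_zero, ← hflat]; abel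
  simp only [hD, sub_apply, smul_apply, map_add, map_smul, mul_add, add_mul, mul_sub, smul_add,
    smul_sub, mul_one, smul_mul_assoc, mul_smul_comm, mul_assoc]
  module

theorem norm_transport_defect_le {G G' : E →L[ℝ] M} {D : E →L[ℝ] E →L[ℝ] M} {e h : E} {t : ℝ}
    (ht : t ∈ Icc (0 : ℝ) 1) (hG : ‖G‖ ≤ C) (hG' : ‖G'‖ ≤ C) (hsub : ‖G' - G‖ ≤ C * ‖h‖)
    (hrem : ‖G' - G - D (t • h)‖ ≤ C * ‖h‖ ^ 2) :
    ‖(G' - G - D (t • h)) e + (G' - G) h + t • (G h * ((G' - G) e + G' h))‖ ≤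
      (C + C ^ 2) * (‖e‖ + 1) * ‖h‖ ^ 2 := by
  have hC : 0 ≤ C := (norm_nonneg G).trans hG
  have hcross : ‖t • (G h * ((G' - G) e + G' h))‖ ≤
      1 * (C * ‖h‖ * (C * ‖h‖ * ‖e‖ + C * ‖h‖)) := by
    refine (norm_smul_le _ _).trans <| mul_le_mul ?_ ((norm_mul_le _ _).trans ?_)
      (norm_nonneg _) zero_le_one
    · rw [Real.norm_of_nonneg ht.1]; exact ht.2
    · gcongr
      · exact G.le_of_opNorm_le hG h
      · exact norm_add_le_of_le ((G' - G).le_of_opNorm_le hsub e) (G'.le_of_opNorm_le hG' h)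
  calc _ ≤ C * ‖h‖ ^ 2 * ‖e‖ + C * ‖h‖ * ‖h‖ + 1 * (C * ‖h‖ * (C * ‖h‖ * ‖e‖ + C * ‖h‖)) :=
        norm_add₃_le.trans <| add_le_add_three (ContinuousLinearMap.le_of_opNorm_le _ hrem e)
          ((G' - G).le_of_opNorm_le hsub h) hcross
    _ = _ := by ring

theorem hasDerivWithinAt_transport_mul {a : ℝ → M} (ha : IsSegmentTransport Γ x y a) {t : ℝ}
    (ht : t ∈ Icc (0 : ℝ) 1) (hΓ : DifferentiableAt ℝ Γ (lineMap x y t)) (h : E) :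
    HasDerivWithinAt (fun t ↦ a t * (1 + t • Γ (lineMap x y t) h))
      (a t * Γ (lineMap x y t) (y - x) * (1 + t • Γ (lineMap x y t) h) +
        a t * (Γ (lineMap x y t) h + t • fderiv ℝ Γ (lineMap x y t) (y - x) h)) (Icc 0 1) t := by
  have hΓt : HasDerivAt (fun t ↦ Γ (lineMap x y t) h)
      (fderiv ℝ Γ (lineMap x y t) (y - x) h) t := by
    simpa using (hΓ.hasFDerivAt.comp_hasDerivAt t hasDerivAt_lineMap).clm_apply
      (hasDerivAt_const t h)
  have hfactor := ((hasDerivAt_id t).smul hΓt).const_add 1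
  simpa [add_comm] using (ha.2 t ht).fun_mul hfactor.hasDerivWithinAt

-- Flatness makes `a t * (1 + t • Γ (z - y))`, which starts at `1`, solve the transport equation
-- along the segment from `x` to `z` up to an error of second order in `z - y`.
theorem norm_transport_sub_le (hs : Convex ℝ s) (hΓ : HasTaylorBoundOn Γ s C)
    (hflat : ∀ p ∈ s, ∀ v w, curvature Γ p v w = 0) (hx : x ∈ s) (hy : y ∈ s) (hz : z ∈ s)
    (hsmall : C * ‖z - x‖ ≤ 1) {a b : ℝ → M} (ha : IsSegmentTransport Γ x y a)
    (hb : IsSegmentTransport Γ x z b) {m : ℝ} (hm : ∀ t ∈ Icc (0 : ℝ) 1, ‖a t‖ ≤ m) :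
    ‖b 1 - a 1 * (1 + Γ y (z - y))‖ ≤
      m * ((C + C ^ 2) * (‖y - x‖ + 1) * ‖z - y‖ ^ 2) * (Real.exp 1 - 1) := by
  have hC : 0 ≤ C := (norm_nonneg _).trans (hΓ.norm_le x hx)
  have happrox := norm_sub_le_of_approx_solution_mul_right
    (fun t ht ↦ (norm_apply_lineMap_le hs hΓ hx hz ht).trans hsmall) hb.2
    (fun t ht ↦ hasDerivWithinAt_transport_mul ha ht
      (hΓ.differentiableAt _ (hs.lineMap_mem hx hy ht)) (z - y))
    (ε := m * ((C + C ^ 2) * (‖y - x‖ + 1) * ‖z - y‖ ^ 2)) (fun t ht ↦ ?_) (by simp [ha.1, hb.1])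
  · simpa using happrox
  have hp : lineMap x y t ∈ s := hs.lineMap_mem hx hy ht
  have hq : lineMap x z t ∈ s := hs.lineMap_mem hx hz ht
  have hqp : lineMap x z t - lineMap x y t = t • (z - y) := by
    simp only [lineMap_apply_module]; module
  have hnorm : ‖t • (z - y)‖ ≤ ‖z - y‖ := by
    rw [norm_smul, Real.norm_of_nonneg ht.1]
    exact mul_le_of_le_one_left (norm_nonneg _) ht.2
  have hsub := hΓ.norm_sub_le _ hp _ hq
  have hrem := hΓ.norm_sub_sub_fderiv_le _ hp _ hq
  rw [hqp] at hsub hrem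
  rw [show z - x = (y - x) + (z - y) by abel, transport_defect_eq (hflat _ hp _ _), norm_neg]
  refine (norm_mul_le _ _).trans <| mul_le_mul (hm t ht) ?_ (norm_nonneg _)
    ((norm_nonneg _).trans (hm t ht))
  exact norm_transport_defect_le ht (hΓ.norm_le _ hp) (hΓ.norm_le _ hq)
    (hsub.trans (by gcongr)) (hrem.trans (by gcongr))

theorem isParallelCoframeAt_transport (hs : Convex ℝ s) (hy : s ∈ 𝓝 y)
    (hΓ : HasTaylorBoundOn Γ s C) (hflat : ∀ p ∈ s, ∀ v w, curvature Γ p v w = 0) (hx : x ∈ s)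
    (hsmall : ∀ z ∈ s, C * ‖z - x‖ ≤ 1) {a : E → ℝ → M}
    (ha : ∀ z ∈ s, IsSegmentTransport Γ x z (a z)) :
    IsParallelCoframeAt Γ (fun z ↦ a z 1) y := by
  have hys : y ∈ s := mem_of_mem_nhds hy
  obtain ⟨m, hm⟩ := isCompact_Icc.exists_bound_of_continuousOn
    fun t ht ↦ ((ha y hys).2 t ht).continuousWithinAt
  have hquad : (fun z ↦ a z 1 - a y 1 * (1 + Γ y (z - y))) =O[𝓝 y] fun z ↦ ‖z - y‖ ^ 2 := by
    refine .of_bound (m * ((C + C ^ 2) * (‖y - x‖ + 1)) * (Real.exp 1 - 1)) ?_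
    filter_upwards [hy] with z hz
    refine (norm_transport_sub_le hs hΓ hflat hx hys hz (hsmall z hz) (ha y hys) (ha z hz)
      hm).trans_eq ?_
    rw [norm_pow, norm_norm]; ring
  have hlin : HasFDerivAt (fun z ↦ a y 1 * (1 + Γ y (z - y)))
      (ContinuousLinearMap.mul ℝ M (a y 1) ∘L Γ y) y :=
    (ContinuousLinearMap.mul ℝ M (a y 1)).hasFDerivAt.comp y <|
      ((Γ y).hasFDerivAt.comp y ((hasFDerivAt_id y).sub_const y)).const_add 1
  simpa [IsParallelCoframeAt] using (hquad.hasFDerivAt one_lt_two).fun_add hlin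

theorem exists_isParallelCoframeAt_of_curvature_eq_zero [CompleteSpace M]
    (hΓ : ContDiffAt ℝ 2 Γ x) (hflat : ∀ᶠ p in 𝓝 x, ∀ v w, curvature Γ p v w = 0) :
    ∃ A : E → M, A x = 1 ∧ ∀ᶠ y in 𝓝 x, IsParallelCoframeAt Γ A y := by
  obtain ⟨C, hC, r₁, hr₁, hTaylor⟩ := exists_hasTaylorBoundOn_ball hΓ
  obtain ⟨r₂, hr₂, hflat⟩ := eventually_nhds_iff_ball.1 hflat
  obtain ⟨r, hr, hrr₁, hrr₂, hCr⟩ : ∃ r > 0, r ≤ r₁ ∧ r ≤ r₂ ∧ C * r ≤ 1 / 2 :=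
    ⟨min (min r₁ r₂) (1 / 2 / C), by positivity, (min_le_left _ _).trans (min_le_left _ _),
      (min_le_left _ _).trans (min_le_right _ _), (le_div_iff₀' hC).1 (min_le_right _ _)⟩
  have hTaylor : HasTaylorBoundOn Γ (ball x r) C := hTaylor.mono (ball_subset_ball hrr₁)
  have hx : x ∈ ball x r := mem_ball_self hr
  have hsmall : ∀ z ∈ ball x r, C * ‖z - x‖ ≤ 1 / 2 := fun z hz ↦
    (mul_le_mul_of_nonneg_left (mem_ball_iff_norm.1 hz).le hC.le).trans hCr
  choose! a ha using fun z hz ↦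
    exists_isSegmentTransport (convex_ball x r) hTaylor hx hz (hsmall z hz)
  refine ⟨fun z ↦ a z 1, (ha x hx).apply_one_of_self, ?_⟩
  filter_upwards [isOpen_ball.mem_nhds hx] with y hy
  exact isParallelCoframeAt_transport (convex_ball x r) (isOpen_ball.mem_nhds hy) hTaylor
    (fun p hp ↦ hflat p (ball_subset_ball hrr₂ hp)) hx
    (fun z hz ↦ (hsmall z hz).trans (by norm_num)) ha

theorem curvature_eq_zero_of_isParallelCoframeAt (hΓ : DifferentiableAt ℝ Γ y)
    (hA : ∀ᶠ p in 𝓝 y, IsParallelCoframeAt Γ A p) (hunit : IsUnit (A y)) (v w : E) :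
    curvature Γ y v w = 0 := by
  have hdd := ((ContinuousLinearMap.mul ℝ M).hasFDerivAt.comp y hA.self_of_nhds).clm_comp
    hΓ.hasFDerivAt
  have hsymm : A y * fderiv ℝ Γ y v w + A y * Γ y v * Γ y w =
      A y * fderiv ℝ Γ y w v + A y * Γ y w * Γ y v :=
    second_derivative_symmetric_of_eventually hA hdd v w
  refine hunit.mul_right_eq_zero.1 ?_
  rw [← sub_eq_zero.2 hsymm, curvature]
  noncomm_ring

theorem contDiffOn_of_isParallelCoframeAt (hs : IsOpen s) (hΓ : ContDiffOn ℝ ∞ Γ s)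
    (hA : ∀ y ∈ s, IsParallelCoframeAt Γ A y) : ContDiffOn ℝ ∞ A s := by
  have hdiff : DifferentiableOn ℝ A s := fun y hy ↦
    (hA y hy).differentiableAt.differentiableWithinAt
  refine contDiffOn_infty.2 fun k ↦ ?_
  induction k with
  | zero => exact contDiffOn_zero.2 hdiff.continuousOn
  | succ k ih =>
    push_cast
    refine (contDiffOn_succ_iff_fderiv_of_isOpen hs).2 ⟨hdiff, by simp, ?_⟩
    exact (((ContinuousLinearMap.mul ℝ M).contDiff.comp_contDiffOn ih).clm_comp
      (contDiffOn_infty.1 hΓ k)).congr fun y hy ↦ (hA y hy).fderiv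

end Frobenius

section MaurerCartan

variable {E M : Type*} [NormedAddCommGroup E] [NormedSpace ℝ E] [NormedRing M] [NormedAlgebra ℝ M]
  {A : E → M} {s : Set E} {y : E}

/-- The left Maurer–Cartan form `A⁻¹ dA` of an algebra-valued function `A`, with the junk value `0`
where `A` is not invertible. -/
noncomputable def maurerCartanForm (A : E → M) (y : E) : E →L[ℝ] M :=
  ContinuousLinearMap.mul ℝ M (Ring.inverse (A y)) ∘L fderiv ℝ A y

theorem isParallelCoframeAt_maurerCartanForm (hA : DifferentiableAt ℝ A y) (hunit : IsUnit (A y)) :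
    IsParallelCoframeAt (maurerCartanForm A) A y := by
  refine hA.hasFDerivAt.congr_fderiv ?_
  ext v
  exact (Ring.mul_inverse_cancel_left _ _ hunit).symm

theorem contDiffOn_maurerCartanForm [CompleteSpace M] (hs : IsOpen s) (hA : ContDiffOn ℝ ∞ A s)
    (hunit : ∀ y ∈ s, IsUnit (A y)) : ContDiffOn ℝ ∞ (maurerCartanForm A) s := by
  have hinv : ContDiffOn ℝ ∞ (fun y ↦ Ring.inverse (A y)) s := fun y hy ↦ by
    obtain ⟨a, ha⟩ := hunit y hy
    exact (ha ▸ contDiffAt_ringInverse ℝ a).comp_contDiffWithinAt y (hA y hy)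
  exact ((ContinuousLinearMap.mul ℝ M).contDiff.comp_contDiffOn hinv).clm_comp
    ((contDiffOn_infty_iff_fderiv_of_isOpen hs).1 hA).2

theorem curvature_maurerCartanForm_eq_zero [CompleteSpace M] (hs : IsOpen s)
    (hA : ContDiffOn ℝ ∞ A s) (hunit : ∀ y ∈ s, IsUnit (A y)) (hy : y ∈ s) (v w : E) :
    curvature (maurerCartanForm A) y v w = 0 := by
  have hsmooth := (contDiffOn_maurerCartanForm hs hA hunit).contDiffAt (hs.mem_nhds hy)
  refine curvature_eq_zero_of_isParallelCoframeAt (hsmooth.differentiableAt (by simp)) ?_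
    (hunit y hy) v w
  filter_upwards [hs.mem_nhds hy] with p hp
  exact isParallelCoframeAt_maurerCartanForm
    ((hA.contDiffAt (hs.mem_nhds hp)).differentiableAt (by simp)) (hunit p hp)

end MaurerCartan

section Connection

variable {E F ι : Type*} [NormedAddCommGroup E] [NormedSpace ℝ E] [NormedAddCommGroup F]
  [NormedSpace ℝ F] {Γ : E → E →L[ℝ] E →L[ℝ] E}
  {V : E → ContinuousMultilinearMap ℝ (fun _ : ι ↦ E →L[ℝ] ℝ) F} {A : E → E →L[ℝ] E} {u : E → E}
  {s U : Set E} {x y : E} {w : ι → E →L[ℝ] ℝ}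

/-- The linear connection with Christoffel field `Γ` is torsion-free on `s`. -/
def IsTorsionFreeOn (Γ : E → E →L[ℝ] E →L[ℝ] E) (s : Set E) : Prop :=
  ∀ y ∈ s, ∀ v w, Γ y v w = Γ y w v

/-- The linear connection with Christoffel field `Γ` is flat on `s`: its curvature, written out on
constant vector fields, vanishes. -/
def IsFlatOn (Γ : E → E →L[ℝ] E →L[ℝ] E) (s : Set E) : Prop :=
  ∀ y ∈ s, ∀ v w z, fderiv ℝ (fun t ↦ Γ t w z) y v - fderiv ℝ (fun t ↦ Γ t v z) y w +
    Γ y v (Γ y w z) - Γ y w (Γ y v z) = 0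

theorem isFlatOn_iff_curvature_eq_zero (hΓ : ∀ y ∈ s, DifferentiableAt ℝ Γ y) :
    IsFlatOn Γ s ↔ ∀ y ∈ s, ∀ v w, curvature Γ y v w = 0 := by
  have fderiv_apply_apply {y : E} (hy : y ∈ s) (v w z : E) :
      fderiv ℝ (fun t ↦ Γ t w z) y v = fderiv ℝ Γ y v w z := by
    have := ((hΓ y hy).hasFDerivAt.clm_apply (hasFDerivAt_const w y)).clm_apply
      (hasFDerivAt_const z y)
    simp [this.fderiv]
  refine forall₂_congr fun y hy ↦ forall₂_congr fun v w ↦ ?_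
  simp [ContinuousLinearMap.ext_iff, curvature, fderiv_apply_apply hy]

theorem isTorsionFreeOn_maurerCartanForm_fderiv (hs : IsOpen s) (hu : ContDiffOn ℝ ∞ u s) :
    IsTorsionFreeOn (maurerCartanForm (fderiv ℝ u)) s := by
  intro y hy v w
  have hsymm : IsSymmSndFDerivAt ℝ u y :=
    (hu.contDiffAt (hs.mem_nhds hy)).isSymmSndFDerivAt
      (minSmoothness_of_isRCLikeNormedField.trans_le ENat.LEInfty.out)
  exact congrArg (Ring.inverse (fderiv ℝ u y) :) (hsymm v w)

theorem isFlatOn_maurerCartanForm [CompleteSpace E] (hs : IsOpen s) (hA : ContDiffOn ℝ ∞ A s)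
    (hunit : ∀ y ∈ s, IsUnit (A y)) : IsFlatOn (maurerCartanForm A) s :=
  (isFlatOn_iff_curvature_eq_zero fun _ hy ↦ ((contDiffOn_maurerCartanForm hs hA hunit).contDiffAt
    (hs.mem_nhds hy)).differentiableAt (by simp)).2
    fun _ hy ↦ curvature_maurerCartanForm_eq_zero hs hA hunit hy

theorem exists_hasFDerivAt_of_isTorsionFreeOn [CompleteSpace E] (hs : Convex ℝ s) (hs' : IsOpen s)
    (hA : ∀ y ∈ s, IsParallelCoframeAt Γ A y) (htor : IsTorsionFreeOn Γ s) :
    ∃ u : E → E, ∀ y ∈ s, HasFDerivAt u (A y) y := by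
  refine hs.exists_forall_hasFDerivAt_of_fderiv_symmetric hs'
    (fun y hy ↦ (hA y hy).differentiableAt.differentiableWithinAt) fun y hy v w ↦ ?_
  rw [(hA y hy).fderiv]
  exact congrArg (A y) (htor y hy v w)

theorem exists_ball_isParallelCoframeAt [CompleteSpace E] (hs : IsOpen s) (hx : x ∈ s)
    (hΓ : ContDiffOn ℝ ∞ Γ s) (hflat : IsFlatOn Γ s) :
    ∃ A : E → E →L[ℝ] E, A x = 1 ∧ ∃ r > 0, ball x r ⊆ s ∧
      ∀ y ∈ ball x r, IsParallelCoframeAt Γ A y ∧ IsUnit (A y) := by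
  have hcurv := (isFlatOn_iff_curvature_eq_zero fun y hy ↦
    (hΓ.contDiffAt (hs.mem_nhds hy)).differentiableAt (by simp)).1 hflat
  have hs' : ∀ᶠ y in 𝓝 x, y ∈ s := hs.mem_nhds hx
  obtain ⟨A, hAx, hA⟩ := exists_isParallelCoframeAt_of_curvature_eq_zero
    ((hΓ.contDiffAt hs').of_le ENat.LEInfty.out) (hs'.mono hcurv)
  have hunit : ∀ᶠ y in 𝓝 x, IsUnit (A y) :=
    hA.self_of_nhds.continuousAt.eventually_mem (Units.isOpen.mem_nhds (hAx ▸ isUnit_one))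
  obtain ⟨r, hr, hball⟩ := eventually_nhds_iff_ball.1 (hs'.and (hA.and hunit))
  exact ⟨A, hAx, r, hr, fun y hy ↦ (hball y hy).1, fun y hy ↦ (hball y hy).2⟩

theorem exists_isOpen_injOn_isOpen_image [CompleteSpace E] (hu : ContDiffAt ℝ 1 u x)
    (hunit : IsUnit (fderiv ℝ u x)) (hs : IsOpen s) (hx : x ∈ s) :
    ∃ W ⊆ s, IsOpen W ∧ x ∈ W ∧ InjOn u W ∧ IsOpen (u '' W) := by
  obtain ⟨e, he⟩ : ∃ e : E ≃L[ℝ] E, (e : E →L[ℝ] E) = fderiv ℝ u x :=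
    ⟨ContinuousLinearEquiv.unitsEquiv ℝ E hunit.unit, rfl⟩
  have hderiv : HasFDerivAt u (e : E →L[ℝ] E) x :=
    he ▸ (hu.differentiableAt one_ne_zero).hasFDerivAt
  let φ := hu.toOpenPartialHomeomorph u hderiv one_ne_zero
  have hxφ : x ∈ φ.source := hu.mem_toOpenPartialHomeomorph_source hderiv one_ne_zero
  exact ⟨s ∩ φ.source, inter_subset_left, hs.inter φ.open_source, ⟨hx, hxφ⟩,
    φ.injOn.mono inter_subset_right,
    φ.isOpen_image_of_subset_source (hs.inter φ.open_source) inter_subset_right⟩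

/-- The component of the tensor field `V` on the covector fields `w i ∘ A`. -/
noncomputable def coframeComponent (V : E → ContinuousMultilinearMap ℝ (fun _ : ι ↦ E →L[ℝ] ℝ) F)
    (A : E → E →L[ℝ] E) (w : ι → E →L[ℝ] ℝ) (y : E) : F :=
  V y fun i ↦ (w i).comp (A y)

theorem differentiableAt_coframeComponent [Finite ι] (hV : DifferentiableAt ℝ V y)
    (hA : DifferentiableAt ℝ A y) : DifferentiableAt ℝ (coframeComponent V A w) y := by
  classical
  have := Fintype.ofFinite ι
  exact (hV.hasFDerivAt.continuousMultilinearMap_apply fun i ↦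
    (hasFDerivAt_const (w i) y).clm_comp hA.hasFDerivAt).differentiableAt

/-- The tensor field `V` on `U` has constant coefficients near `x`: some chart `u` defined on an
open neighbourhood of `x` in `U` pushes it forward to a constant tensor `c`. -/
def HasConstantCoefficientsAt (U : Set E)
    (V : E → ContinuousMultilinearMap ℝ (fun _ : ι ↦ E →L[ℝ] ℝ) F) (x : E) : Prop :=
  ∃ W : Set E, IsOpen W ∧ x ∈ W ∧ W ⊆ U ∧ ∃ u : E → E, ContDiffOn ℝ ∞ u W ∧ InjOn u W ∧
    IsOpen (u '' W) ∧ (∀ y ∈ W, Function.Bijective (fderiv ℝ u y)) ∧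
    ∃ c : ContinuousMultilinearMap ℝ (fun _ : ι ↦ E →L[ℝ] ℝ) F,
      ∀ y ∈ W, ∀ w, c w = coframeComponent V (fderiv ℝ u) w y

theorem HasConstantCoefficientsAt.mono (hV : HasConstantCoefficientsAt s V x) (hsU : s ⊆ U) :
    HasConstantCoefficientsAt U V x :=
  let ⟨W, hW, hx, hWs, hchart⟩ := hV
  ⟨W, hW, hx, hWs.trans hsU, hchart⟩

variable [Fintype ι] [DecidableEq ι]

/-- The covariant derivative in the direction `v` of a contravariant tensor field `V`, whose
arguments are the covectors `w i`, for the connection with Christoffel field `Γ`. -/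
noncomputable def covariantDeriv (Γ : E → E →L[ℝ] E →L[ℝ] E)
    (V : E → ContinuousMultilinearMap ℝ (fun _ : ι ↦ E →L[ℝ] ℝ) F) (y v : E)
    (w : ι → E →L[ℝ] ℝ) : F :=
  fderiv ℝ V y v w + ∑ h, V y (Function.update w h ((w h).comp (Γ y v)))

/-- The tensor field `V` is parallel on `s` for the connection with Christoffel field `Γ`. -/
def IsParallelOn (Γ : E → E →L[ℝ] E →L[ℝ] E)
    (V : E → ContinuousMultilinearMap ℝ (fun _ : ι ↦ E →L[ℝ] ℝ) F) (s : Set E) : Prop :=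
  ∀ y ∈ s, ∀ v w, covariantDeriv Γ V y v w = 0

theorem fderiv_coframeComponent_apply (hV : DifferentiableAt ℝ V y)
    (hA : IsParallelCoframeAt Γ A y) (v : E) :
    fderiv ℝ (coframeComponent V A w) y v =
      covariantDeriv Γ V y v (fun i ↦ (w i).comp (A y)) := by
  have hderiv := hV.hasFDerivAt.continuousMultilinearMap_apply fun i ↦
    (hasFDerivAt_const (w i) y).clm_comp hA
  refine (congrArg (· v) hderiv.fderiv).trans ?_
  simp [covariantDeriv, ContinuousMultilinearMap.toContinuousLinearMap,
    ContinuousLinearMap.comp_assoc, ContinuousLinearMap.mul_def]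

theorem covariantDeriv_eq_zero_of_coframeComponent_eventuallyEq
    (hV : DifferentiableAt ℝ V y) (hA : IsParallelCoframeAt Γ A y) (hunit : IsUnit (A y))
    {c : (ι → E →L[ℝ] ℝ) → F} (hc : ∀ w, coframeComponent V A w =ᶠ[𝓝 y] fun _ ↦ c w) (v : E)
    (w : ι → E →L[ℝ] ℝ) : covariantDeriv Γ V y v w = 0 := by
  have hw : (fun i ↦ ((w i).comp (Ring.inverse (A y))).comp (A y)) = w := by
    funext i
    rw [ContinuousLinearMap.comp_assoc, ← ContinuousLinearMap.mul_def,
      Ring.inverse_mul_cancel _ hunit, ContinuousLinearMap.one_def, ContinuousLinearMap.comp_id]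
  rw [← hw, ← fderiv_coframeComponent_apply hV hA, (hc _).fderiv_eq]
  simp

theorem coframeComponent_eq_of_isParallelOn (hs : IsOpen s) (hs' : IsPreconnected s)
    (hV : ∀ y ∈ s, DifferentiableAt ℝ V y) (hA : ∀ y ∈ s, IsParallelCoframeAt Γ A y)
    (hpar : IsParallelOn Γ V s) (hx : x ∈ s) (hy : y ∈ s) :
    coframeComponent V A w x = coframeComponent V A w y := by
  refine hs.is_const_of_fderiv_eq_zero (𝕜 := ℝ) hs' (fun p hp ↦ ?_) (fun p hp ↦ ?_) hx hy
  · exact (differentiableAt_coframeComponent (hV p hp)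
      (hA p hp).differentiableAt).differentiableWithinAt
  · ext v
    exact (fderiv_coframeComponent_apply (hV p hp) (hA p hp) v).trans (hpar p hp v _)

theorem isParallelOn_maurerCartanForm (hs : IsOpen s) (hV : DifferentiableOn ℝ V s)
    (hA : DifferentiableOn ℝ A s) (hunit : ∀ y ∈ s, IsUnit (A y)) {c : (ι → E →L[ℝ] ℝ) → F}
    (hc : ∀ y ∈ s, ∀ w, c w = coframeComponent V A w y) :
    IsParallelOn (maurerCartanForm A) V s := by
  intro y hy
  have hys : s ∈ 𝓝 y := hs.mem_nhds hy
  refine covariantDeriv_eq_zero_of_coframeComponent_eventuallyEq (hV.differentiableAt hys)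
    (isParallelCoframeAt_maurerCartanForm (hA.differentiableAt hys) (hunit y hy)) (hunit y hy)
    (c := c) fun w ↦ ?_
  filter_upwards [hys] with p hp using (hc p hp w).symm

theorem hasConstantCoefficientsAt_of_isParallelOn [CompleteSpace E] (hs : IsOpen s) (hx : x ∈ s)
    (hV : DifferentiableOn ℝ V s) (hΓ : ContDiffOn ℝ ∞ Γ s) (htor : IsTorsionFreeOn Γ s)
    (hflat : IsFlatOn Γ s) (hpar : IsParallelOn Γ V s) : HasConstantCoefficientsAt s V x := by
  obtain ⟨A, hAx, r, hr, hrs, hball⟩ := exists_ball_isParallelCoframeAt hs hx hΓ hflat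
  obtain ⟨hA, hunit⟩ := forall₂_and.1 hball
  have hxr : x ∈ ball x r := mem_ball_self hr
  obtain ⟨u, hu⟩ := exists_hasFDerivAt_of_isTorsionFreeOn (convex_ball x r) isOpen_ball hA
    fun y hy ↦ htor y (hrs hy)
  have hu_smooth : ContDiffOn ℝ ∞ u (ball x r) :=
    (contDiffOn_infty_iff_fderiv_of_isOpen isOpen_ball).2
      ⟨fun y hy ↦ (hu y hy).differentiableAt.differentiableWithinAt,
        (contDiffOn_of_isParallelCoframeAt isOpen_ball (hΓ.mono hrs) hA).congr
          fun y hy ↦ (hu y hy).fderiv⟩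
  have hcomp : ∀ y ∈ ball x r, ∀ w, V x w = coframeComponent V (fderiv ℝ u) w y := fun y hy w ↦ by
    have hconst := coframeComponent_eq_of_isParallelOn (w := w) isOpen_ball
      (convex_ball x r).isPreconnected
      (fun p hp ↦ hV.differentiableAt (hs.mem_nhds (hrs hp))) hA (fun p hp ↦ hpar p (hrs hp)) hxr hy
    simpa [coframeComponent, hAx, (hu y hy).fderiv, ContinuousLinearMap.one_def] using hconst
  obtain ⟨W, hWr, hW, hxW, hinj, himage⟩ := exists_isOpen_injOn_isOpen_image
    ((hu_smooth.contDiffAt (isOpen_ball.mem_nhds hxr)).of_le ENat.LEInfty.out)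
    ((hu x hxr).fderiv ▸ hunit x hxr) isOpen_ball hxr
  exact ⟨W, hW, hxW, hWr.trans hrs, u, hu_smooth.mono hWr, hinj, himage,
    fun y hy ↦ ContinuousLinearMap.isUnit_iff_bijective.1
      ((hu y (hWr hy)).fderiv ▸ hunit y (hWr hy)),
    V x, fun y hy ↦ hcomp y (hWr hy)⟩

end Connection

theorem constantCoefficientsVec_iff_flatConnection_general {E F ι : Type*} [NormedAddCommGroup E]
    [NormedSpace ℝ E] [CompleteSpace E] [NormedAddCommGroup F] [NormedSpace ℝ F] [Fintype ι]
    [DecidableEq ι] {U : Set E} {V : E → ContinuousMultilinearMap ℝ (fun _ : ι ↦ E →L[ℝ] ℝ) F}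
    (hV : DifferentiableOn ℝ V U) {x : E} :
    HasConstantCoefficientsAt U V x ↔
      ∃ W : Set E, IsOpen W ∧ x ∈ W ∧ W ⊆ U ∧ ∃ Γ : E → E →L[ℝ] E →L[ℝ] E,
        ContDiffOn ℝ ∞ Γ W ∧ IsTorsionFreeOn Γ W ∧ IsFlatOn Γ W ∧ IsParallelOn Γ V W := by
  constructor
  · rintro ⟨W, hW, hx, hWU, u, hu, -, -, hbij, c, hc⟩
    have hunit : ∀ y ∈ W, IsUnit (fderiv ℝ u y) := fun y hy ↦
      ContinuousLinearMap.isUnit_iff_bijective.2 (hbij y hy)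
    have hdu : ContDiffOn ℝ ∞ (fderiv ℝ u) W :=
      ((contDiffOn_infty_iff_fderiv_of_isOpen hW).1 hu).2
    exact ⟨W, hW, hx, hWU, maurerCartanForm (fderiv ℝ u), contDiffOn_maurerCartanForm hW hdu hunit,
      isTorsionFreeOn_maurerCartanForm_fderiv hW hu, isFlatOn_maurerCartanForm hW hdu hunit,
      isParallelOn_maurerCartanForm hW (hV.mono hWU) (hdu.differentiableOn (by simp)) hunit hc⟩
  · rintro ⟨W, hW, hx, hWU, Γ, hΓ, htor, hflat, hpar⟩
    exact (hasConstantCoefficientsAt_of_isParallelOn hW hx (hV.mono hWU) hΓ htor hflat hpar).mono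
      hWU

/-- Proposition 2.1, contravariant case: a smooth `q`-vector field
`V` has constant coefficients near `x` iff there are an open neighbourhood `W ∋ x`
and a smooth torsion-free flat Christoffel field `Γ` on `W` with `∇V = 0` on `W`,
i.e. `(DV_y(v))(w₁,…,w_q) + Σ_h V_y(w₁,…,w_h∘Γ_y(v,·),…,w_q) = 0`. -/
theorem constantCoefficientsVec_iff_flatConnection (n q : ℕ)
    (U : Set (Fin n → ℝ)) (hU : IsOpen U)
    (V : (Fin n → ℝ) → (((Fin n → ℝ) →L[ℝ] ℝ) [×q]→L[ℝ] ℝ))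
    (hV : ContDiffOn ℝ (⊤ : ℕ∞) V U)
    (halt : ∀ y ∈ U, ∀ w : Fin q → ((Fin n → ℝ) →L[ℝ] ℝ), ∀ i j, i ≠ j → w i = w j →
      V y w = 0)
    (x : Fin n → ℝ) (hx : x ∈ U) :
    HasConstantCoefficientsVecAt n q U V x ↔
      ∃ W : Set (Fin n → ℝ), IsOpen W ∧ x ∈ W ∧ W ⊆ U ∧
        ∃ Γ : (Fin n → ℝ) → ((Fin n → ℝ) →L[ℝ] (Fin n → ℝ) →L[ℝ] (Fin n → ℝ)),
          ContDiffOn ℝ (⊤ : ℕ∞) Γ W ∧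
          -- torsion-free
          (∀ y ∈ W, ∀ v w : Fin n → ℝ, Γ y v w = Γ y w v) ∧
          -- flat (vanishing curvature)
          (∀ y ∈ W, ∀ v w z : Fin n → ℝ,
            fderiv ℝ (fun t => Γ t w z) y v - fderiv ℝ (fun t => Γ t v z) y w +
              Γ y v (Γ y w z) - Γ y w (Γ y v z) = 0) ∧
          -- ∇V = 0
          (∀ y ∈ W, ∀ v : Fin n → ℝ, ∀ w : Fin q → ((Fin n → ℝ) →L[ℝ] ℝ),
            fderiv ℝ V y v w +
              ∑ h : Fin q, V y (Function.update w h ((w h).comp (Γ y v))) = 0) :=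
  constantCoefficientsVec_iff_flatConnection_general (hV.differentiableOn (by simp))
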